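/- arXiv:0804.1715 — 7 statements merged into one kernel-verified Lean document; each statement's English description precedes it below -/
import Mathlib

section
/- For every S ∈ Σ_L, the integral ∫_{−∞}^{+∞} exp(2∫_0^y S(z) dz) dy is finite and strictly positive; consequently the ergodic density q_S(x) = exp(2∫_0^x S(z) dz) / ∫_{−∞}^{+∞} exp(2∫_0^y S(z) dz) dy is well defined and satisfies ∫_{−∞}^{+∞} q_S(x) dx = 1. -/
open MeasureTheory Real Set Filter

noncomputable section

/-- `f` is Lipschitz with constant `L` and continuous. -/
def IsLip (L : ℝ) (f : ℝ → ℝ) : Prop :=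
  Continuous f ∧ ∀ x y : ℝ, |f x - f y| ≤ L * |x - y|

/-- The functional class `Σ_L`. -/
def SigmaL (L : ℝ) (S : ℝ → ℝ) : Prop :=
  IsLip L S ∧ (∀ z : ℝ, |z| ≤ L → |S z| ≤ L) ∧
  ∃ S' : ℝ → ℝ, ContinuousOn S' {x : ℝ | L ≤ |x|} ∧
    ∀ x : ℝ, L ≤ |x| → HasDerivAt S (S' x) x ∧ -L ≤ S' x ∧ S' x ≤ -(1/L)

/-- Normalizing constant of the ergodic density. -/
def qdenom (S : ℝ → ℝ) : ℝ := ∫ y : ℝ, Real.exp (2 * ∫ z in (0:ℝ)..y, S z)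

/-- The ergodic density `q_S`. -/
def qdens (S : ℝ → ℝ) (x : ℝ) : ℝ :=
  Real.exp (2 * ∫ z in (0:ℝ)..x, S z) / qdenom S

/-- `J(S) = ∫_a^b 1/q_S(u) du`. -/
def Jfun (a b : ℝ) (S : ℝ → ℝ) : ℝ := ∫ u in a..b, 1 / qdens S u

end

theorem aux_half (L : ℝ) (T : ℝ → ℝ) (hc : Continuous T)
    (h : ∀ z : ℝ, 0 ≤ z → T z ≤ L + 1 - z / L) (y : ℝ) (hy : 0 ≤ y) :
    (∫ z in (0:ℝ)..y, T z) ≤ (L + 1) * y - y ^ 2 / (2 * L) := by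
  have h1 : (∫ z in (0:ℝ)..y, T z) ≤ ∫ z in (0:ℝ)..y, (L + 1 - z / L) := by
    apply intervalIntegral.integral_mono_on hy (hc.intervalIntegrable _ _)
    · exact Continuous.intervalIntegrable (by fun_prop) _ _
    · intro x hx
      exact h x hx.1
  have h2 : (∫ z in (0:ℝ)..y, (L + 1 - z / L)) = (L + 1) * y - y ^ 2 / (2 * L) := by
    rw [intervalIntegral.integral_sub (by simp) (Continuous.intervalIntegrable (by fun_prop) _ _),
      intervalIntegral.integral_div, integral_id, intervalIntegral.integral_const]
    simp only [smul_eq_mul]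
    rw [show y ^ 2 / (2 * L) = y ^ 2 / 2 / L by rw [div_div]]
    ring
  linarith

theorem aux_right (L : ℝ) (hL : 1 ≤ L) (S : ℝ → ℝ) (hS : SigmaL L S) (z : ℝ) (hz : 0 ≤ z) :
    S z ≤ L + 1 - z / L := by
  obtain ⟨⟨hc, -⟩, hb, S', -, hd⟩ := hS
  have hL0 : 0 < L := by linarith
  rcases le_total z L with hzL | hzL
  · have h1 := (abs_le.1 (hb z (by rwa [abs_of_nonneg hz]))).2
    have h2 : z / L ≤ 1 := (div_le_one hL0).2 hzL
    linarith
  · have hm := (convex_Ici L).image_sub_le_mul_sub_of_deriv_le (f := S) (C := -(1/L))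
      hc.continuousOn
      (fun x hx => (hd x (le_trans (interior_subset hx) (le_abs_self x))).1.differentiableAt.differentiableWithinAt)
      (fun x hx => by
        have := hd x (le_trans (interior_subset hx) (le_abs_self x))
        rw [this.1.deriv]; exact this.2.2)
      L self_mem_Ici z hzL hzL
    have h1 := (abs_le.1 (hb L (by rw [abs_of_pos hL0]))).2
    have h3 : -(1/L) * (z - L) = 1 - z / L := by field_simp; ring
    linarith

theorem aux_refl (L : ℝ) (S : ℝ → ℝ) (hS : SigmaL L S) : SigmaL L (fun z => -S (-z)) := by
  obtain ⟨⟨hc, hl⟩, hb, S', hc', hd⟩ := hS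
  refine ⟨⟨by fun_prop, fun x y => ?_⟩, fun z hz => ?_, fun z => S' (-z), ?_, fun x hx => ?_⟩
  · have := hl (-y) (-x)
    rw [show -S (-x) - -S (-y) = S (-y) - S (-x) by ring]
    rwa [show -y - -x = x - y by ring] at this
  · rw [abs_neg]; exact hb _ (by rwa [abs_neg])
  · exact hc'.comp continuous_neg.continuousOn (fun x hx => by simpa using hx)
  · obtain ⟨h1, h2⟩ := hd (-x) (by rwa [abs_neg])
    refine ⟨?_, h2⟩
    have := (h1.comp x (hasDerivAt_neg x)).neg
    rw [mul_neg_one, neg_neg] at this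
    exact this

theorem aux_bound (L : ℝ) (hL : 1 ≤ L) (S : ℝ → ℝ) (hS : SigmaL L S) (y : ℝ) :
    (∫ z in (0:ℝ)..y, S z) ≤ (L + 1) * |y| - y ^ 2 / (2 * L) := by
  rcases le_total 0 y with hy | hy
  · rw [abs_of_nonneg hy]
    exact aux_half L S hS.1.1 (aux_right L hL S hS) y hy
  · have hR := aux_refl L S hS
    have := aux_half L _ hR.1.1 (aux_right L hL _ hR) (-y) (by linarith)
    rw [intervalIntegral.integral_neg, intervalIntegral.integral_comp_neg (fun z => S z),
      neg_neg, neg_zero, ← intervalIntegral.integral_symm, neg_sq] at this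
    rwa [abs_of_nonpos hy]

/-- For every `S ∈ Σ_L` the integral `∫ exp(2∫_0^y S) dy` is finite
(i.e. the integrand is integrable) and strictly positive, and the ergodic density
`q_S` integrates to 1. -/
theorem stmt1 (L : ℝ) (hL : 1 ≤ L) (S : ℝ → ℝ) (hS : SigmaL L S) :
    MeasureTheory.Integrable (fun y : ℝ => Real.exp (2 * ∫ z in (0:ℝ)..y, S z)) ∧
    0 < qdenom S ∧
    ∫ x : ℝ, qdens S x = 1 := by
  have hint : MeasureTheory.Integrable
      (fun y : ℝ => Real.exp (2 * ∫ z in (0:ℝ)..y, S z)) := by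
    have hL0 : 0 < L := by linarith
    have hg : Integrable (fun y : ℝ => Real.exp (2 * L * (L + 1) ^ 2)
        * Real.exp (-(1 / (2 * L)) * y ^ 2)) :=
      (integrable_exp_neg_mul_sq (by positivity)).const_mul _
    have hcont : Continuous (fun y : ℝ => ∫ z in (0:ℝ)..y, S z) :=
      intervalIntegral.continuous_primitive (fun a b => hS.1.1.intervalIntegrable a b) 0
    refine hg.mono' (Continuous.aestronglyMeasurable (by fun_prop)) (ae_of_all _ fun y => ?_)
    rw [Real.norm_eq_abs, abs_of_pos (Real.exp_pos _), ← Real.exp_add]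
    apply Real.exp_le_exp.2
    have hb := aux_bound L hL S hS y
    have hsq : 0 ≤ (|y| - 2 * L * (L + 1)) ^ 2 / (2 * L) := by positivity
    have he : (|y| - 2 * L * (L + 1)) ^ 2 / (2 * L)
        = y ^ 2 / (2 * L) - 2 * (L + 1) * |y| + 2 * L * (L + 1) ^ 2 := by
      rw [← sq_abs y]; field_simp; ring
    have h3 : -(1 / (2 * L)) * y ^ 2 = - (y ^ 2 / (2 * L)) := by ring
    linarith
  have hpos : 0 < qdenom S := integral_exp_pos hint
  refine ⟨hint, hpos, ?_⟩
  unfold qdens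
  rw [integral_div]
  exact div_self hpos.ne'
end

section
/- Let L ≥ 1 and a < b with b − a ≥ 1, and set b_* = 1 + |a| + |b|. Then there exist constants 0 < q_* ≤ q^* < ∞ (depending only on L, a, b) such that for every S ∈ Σ_L: q_S(x) ≤ q^* for all x ∈ ℝ, and q_S(x) ≥ q_* for all x with |x| ≤ b_*. Equivalently, 0 < inf_{|x| ≤ b_*} inf_{S ∈ Σ_L} q_S(x) and sup_{x ∈ ℝ} sup_{S ∈ Σ_L} q_S(x) < ∞. -/
open MeasureTheory Real Set Filter

theorem sig_neg {L : ℝ} {S : ℝ → ℝ} (h : SigmaL L S) : SigmaL L (fun x => - S (-x)) := by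
  obtain ⟨⟨hc, hl⟩, hb, S', hS', hd⟩ := h
  refine ⟨⟨by fun_prop, fun x y => ?_⟩, fun z hz => ?_, fun x => S' (-x), ?_, fun x hx => ?_⟩
  · have := hl (-y) (-x)
    rw [show -S (-x) - -S (-y) = S (-y) - S (-x) by ring, show x - y = -y - -x by ring]
    exact this
  · rw [abs_neg]; exact hb _ (by rwa [abs_neg])
  · refine hS'.comp (by fun_prop) (fun x hx => ?_)
    simpa using hx
  · obtain ⟨h1, h2, h3⟩ := hd (-x) (by rwa [abs_neg])
    refine ⟨?_, h2, h3⟩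
    have := (h1.comp x (hasDerivAt_neg x)).neg
    beta_reduce
    rw [show S' (-x) = -(S' (-x) * -1) by ring]
    exact this

theorem sig_ub {L : ℝ} {S : ℝ → ℝ} (hL : 1 ≤ L) (h : SigmaL L S) {x : ℝ} (hx : 0 ≤ x) :
    S x ≤ L + 1 - x / L := by
  obtain ⟨⟨hc, hl⟩, hb, S', hS', hd⟩ := h
  have hL0 : 0 < L := by linarith
  rcases le_total x L with hxl | hxl
  · have h1 := (abs_le.1 (hb x (by rwa [abs_of_nonneg hx]))).2
    have : x / L ≤ 1 := (div_le_one hL0).2 hxl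
    linarith
  · have h1 := (abs_le.1 (hb L (by rw [abs_of_pos hL0]))).2
    have key := (convex_Ici L).image_sub_le_mul_sub_of_deriv_le (f := S) (C := -(1/L))
      hc.continuousOn
      (fun y hy => ((hd y (by
        rw [interior_Ici] at hy
        exact hy.le.trans (le_abs_self y))).1).differentiableAt.differentiableWithinAt)
      (fun y hy => by
        rw [interior_Ici] at hy
        have := hd y (hy.le.trans (le_abs_self y))
        rw [this.1.deriv]; exact this.2.2) L self_mem_Ici x hxl hxl
    have e : -(1/L) * (x - L) = 1 - x / L := by field_simp; ring
    linarith

theorem sig_F_ub {L : ℝ} {S : ℝ → ℝ} (hL : 1 ≤ L) (h : SigmaL L S) {x : ℝ} (hx : 0 ≤ x) :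
    ∫ z in (0:ℝ)..x, S z ≤ (L + 1) * x - x ^ 2 / (2 * L) := by
  have hc := h.1.1
  have h1 : ∫ z in (0:ℝ)..x, S z ≤ ∫ z in (0:ℝ)..x, ((L + 1) - z / L) :=
    intervalIntegral.integral_mono_on hx (hc.intervalIntegrable _ _)
      (Continuous.intervalIntegrable (by fun_prop) _ _) (fun z hz => sig_ub hL h hz.1)
  have h2 : ∫ z in (0:ℝ)..x, ((L + 1) - z / L) = (L + 1) * x - x ^ 2 / (2 * L) := by
    rw [intervalIntegral.integral_sub (by simp)
      (Continuous.intervalIntegrable (by fun_prop) _ _)]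
    simp
    field_simp
  linarith

theorem sig_F_refl (S : ℝ → ℝ) (x : ℝ) :
    ∫ z in (0:ℝ)..x, S z = ∫ z in (0:ℝ)..(-x), - S (-z) := by
  rw [intervalIntegral.integral_neg, intervalIntegral.integral_comp_neg]
  simp [intervalIntegral.integral_symm x 0]

theorem sig_F_ub' {L : ℝ} {S : ℝ → ℝ} (hL : 1 ≤ L) (h : SigmaL L S) (x : ℝ) :
    2 * ∫ z in (0:ℝ)..x, S z ≤ 2 * L * (L + 1) ^ 2 + -(1 / (2 * L)) * x ^ 2 := by
  have hL0 : 0 < L := by linarith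
  have h1 : ∫ z in (0:ℝ)..x, S z ≤ (L + 1) * |x| - |x| ^ 2 / (2 * L) := by
    rcases le_total 0 x with hx | hx
    · rw [abs_of_nonneg hx]; exact sig_F_ub hL h hx
    · rw [abs_of_nonpos hx, sig_F_refl]
      exact sig_F_ub hL (sig_neg h) (by linarith)
  rw [← sq_abs x]
  set t := |x|
  have e : 2 * L * (L + 1) ^ 2 + -(1 / (2 * L)) * t ^ 2 - 2 * ((L + 1) * t - t ^ 2 / (2 * L))
      = (2 * L * (L + 1) - t) ^ 2 / (2 * L) := by
    field_simp; ring
  have : 0 ≤ (2 * L * (L + 1) - t) ^ 2 / (2 * L) := by positivity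
  linarith

theorem sig_F_lb {L B : ℝ} {S : ℝ → ℝ} (hL : 1 ≤ L) (h : SigmaL L S) (x : ℝ) (hx : |x| ≤ B) :
    -(2 * (L * (1 + B) * B)) ≤ 2 * ∫ z in (0:ℝ)..x, S z := by
  have hB : 0 ≤ B := (abs_nonneg x).trans hx
  have h1 : ‖∫ z in (0:ℝ)..x, S z‖ ≤ (L * (1 + B)) * |x - 0| := by
    refine intervalIntegral.norm_integral_le_of_norm_le_const (fun z hz => ?_)
    have hz' : |z| ≤ B := by
      refine le_trans ?_ hx
      have := uIoc_subset_uIcc hz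
      simpa using abs_sub_left_of_mem_uIcc this
    have h2 := h.1.2 z 0
    have h3 := h.2.1 0 (by simp; linarith)
    have h4 : |S z| ≤ |S z - S 0| + |S 0| := by
      simpa using abs_add_le (S z - S 0) (S 0)
    rw [Real.norm_eq_abs]
    rw [sub_zero] at h2
    nlinarith
  rw [sub_zero, Real.norm_eq_abs] at h1
  have h5 : (L * (1 + B)) * |x| ≤ L * (1 + B) * B := by gcongr
  have := (abs_le.1 h1).1
  linarith

/-- there exist constants `0 < q_* ≤ q^*` (depending only on `L, a, b`)
such that for all `S ∈ Σ_L`: `q_S(x) ≤ q^*` for all `x`, and `q_* ≤ q_S(x)` for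
`|x| ≤ b_* = 1 + |a| + |b|`. -/
theorem stmt2 (L a b : ℝ) (hL : 1 ≤ L) (hab : a < b) (hba : 1 ≤ b - a) :
    ∃ qlow qup : ℝ, 0 < qlow ∧ qlow ≤ qup ∧
      ∀ S : ℝ → ℝ, SigmaL L S →
        (∀ x : ℝ, qdens S x ≤ qup) ∧
        (∀ x : ℝ, |x| ≤ 1 + |a| + |b| → qlow ≤ qdens S x) := by
  have hL0 : 0 < L := by linarith
  have hc : 0 < 1 / (2 * L) := by positivity
  set B := 1 + |a| + |b|
  let g : ℝ → ℝ := fun y => exp (2 * L * (L + 1) ^ 2) * exp (-(1 / (2 * L)) * y ^ 2)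
  have hg : Integrable g := (integrable_exp_neg_mul_sq hc).const_mul _
  let K := ∫ y, g y
  have hK : 0 < K := by
    show 0 < ∫ y, exp (2 * L * (L + 1) ^ 2) * exp (-(1 / (2 * L)) * y ^ 2)
    rw [integral_const_mul, integral_gaussian]
    positivity
  let A := exp (-(2 * (L * (1 + 1) * 1)))
  have hA : 0 < A := exp_pos _
  let u := exp (2 * L * (L + 1) ^ 2) / A
  let l := exp (-(2 * (L * (1 + B) * B))) / K
  have hu : 0 < u := div_pos (exp_pos _) hA
  have hl : 0 < l := div_pos (exp_pos _) hK
  refine ⟨min l u, u, lt_min hl hu, min_le_right _ _, fun S hS => ?_⟩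
  have hSc : Continuous S := hS.1.1
  have hFc : Continuous (fun y => exp (2 * ∫ z in (0:ℝ)..y, S z)) := by
    have := intervalIntegral.continuous_primitive (μ := volume)
      (fun a b => hSc.intervalIntegrable a b) 0
    fun_prop
  have hle : ∀ y, exp (2 * ∫ z in (0:ℝ)..y, S z) ≤ g y := fun y => by
    show _ ≤ exp (2 * L * (L + 1) ^ 2) * exp (-(1 / (2 * L)) * y ^ 2)
    rw [← exp_add]
    exact exp_le_exp.2 (sig_F_ub' hL hS y)
  have hint : Integrable (fun y => exp (2 * ∫ z in (0:ℝ)..y, S z)) :=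
    hg.mono' hFc.aestronglyMeasurable (Eventually.of_forall fun y => by
      rw [Real.norm_eq_abs, abs_of_pos (exp_pos _)]; exact hle y)
  have hdK : qdenom S ≤ K := integral_mono hint hg hle
  have hdA : A ≤ qdenom S := by
    calc A = ∫ y in Icc (0:ℝ) 1, A := by simp
      _ ≤ ∫ y in Icc (0:ℝ) 1, exp (2 * ∫ z in (0:ℝ)..y, S z) := by
        refine setIntegral_mono_on (by simp) hint.integrableOn measurableSet_Icc
          (fun y hy => exp_le_exp.2 (sig_F_lb hL hS y ?_))
        rw [abs_of_nonneg hy.1]; exact hy.2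
      _ ≤ qdenom S := setIntegral_le_integral hint
          (Eventually.of_forall fun y => (exp_pos _).le)
  have hd0 : 0 < qdenom S := hA.trans_le hdA
  refine ⟨fun x => ?_, fun x hx => (min_le_left _ _).trans ?_⟩
  · refine div_le_div₀ (exp_pos _).le (exp_le_exp.2 ?_) hA hdA
    have := sig_F_ub' hL hS x
    nlinarith [sq_nonneg x]
  · exact div_le_div₀ (exp_pos _).le (exp_le_exp.2 (sig_F_lb hL hS x hx)) hd0 hdK
end

section
/- Let k ≥ 1 be an integer and let f : [a,b] → ℝ be k times continuously differentiable with f^{(i)}(a) = f^{(i)}(b) for all 0 ≤ i ≤ k. Let θ_j = ∫_a^b f(x) φ_j(x) dx be its Fourier coefficients and ϖ_j = Σ_{i=0}^k (2π⌊j/2⌋/(b−a))^{2i} (with the convention 0^0 = 1). Then Σ_{i=0}^k ∫_a^b (f^{(i)}(x))² dx = Σ_{j=1}^∞ ϖ_j θ_j². -/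
open MeasureTheory Real Set Filter

noncomputable section

/-- The standard trigonometric basis `(φ_j)_{j ≥ 1}` of `L²[a,b]`. -/
def phiB (a b : ℝ) (j : ℕ) (x : ℝ) : ℝ :=
  if j = 1 then 1 / Real.sqrt (b - a)
  else Real.sqrt (2 / (b - a)) *
    (if Even j then Real.cos (2 * Real.pi * ((j / 2 : ℕ) : ℝ) * (x - a) / (b - a))
     else Real.sin (2 * Real.pi * ((j / 2 : ℕ) : ℝ) * (x - a) / (b - a)))

/-- `ϖ_j = Σ_{i=0}^k (2π⌊j/2⌋/(b−a))^{2i}` (with `0^0 = 1`). -/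
def varpi (a b : ℝ) (k : ℕ) (j : ℕ) : ℝ :=
  ∑ i ∈ Finset.range (k + 1), (2 * Real.pi * ((j / 2 : ℕ) : ℝ) / (b - a)) ^ (2 * i)

end


lemma ii_ofReal {g : ℝ → ℝ} {a b : ℝ} (h : IntervalIntegrable g volume a b) :
    IntervalIntegrable (fun x => (g x : ℂ)) volume a b :=
  ⟨Integrable.ofReal h.1, Integrable.ofReal h.2⟩

lemma memLp_two_of_cont {g : ℝ → ℝ} {a b : ℝ} (h : ContinuousOn g (Set.Icc a b)) :
    MemLp (fun x => (g x : ℂ)) 2 (volume.restrict (Set.Ioc a b)) := by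
  have hc : ContinuousOn (fun x => (g x : ℂ)) (Set.Icc a b) :=
    Complex.continuous_ofReal.comp_continuousOn h
  refine MemLp.mono_measure (Measure.restrict_mono Set.Ioc_subset_Icc_self le_rfl) ?_
  rw [memLp_two_iff_integrable_sq_norm (hc.aestronglyMeasurable measurableSet_Icc)]
  exact (hc.norm.pow 2).integrableOn_Icc

lemma normsq_coeff (a b : ℝ) (hab : a < b) (g : ℝ → ℝ) (hg : ContinuousOn g (Set.Icc a b)) (n : ℤ) :
    (b - a)^2 * ‖fourierCoeffOn hab (fun x => (g x : ℂ)) n‖ ^ 2 =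
      (∫ x in a..b, g x * Real.cos (2 * π * n * (x - a) / (b - a))) ^ 2 +
      (∫ x in a..b, g x * Real.sin (2 * π * n * (x - a) / (b - a))) ^ 2 := by
  have hT : 0 < b - a := sub_pos.2 hab
  have hg' : ContinuousOn g (Set.uIcc a b) := by rwa [Set.uIcc_of_le hab.le]
  have hC : IntervalIntegrable (fun x => g x * Real.cos (2 * π * n * (x - a) / (b - a))) volume a b :=
    (hg'.mul (by fun_prop)).intervalIntegrable
  have hS : IntervalIntegrable (fun x => g x * Real.sin (2 * π * n * (x - a) / (b - a))) volume a b :=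
    (hg'.mul (by fun_prop)).intervalIntegrable
  rw [fourierCoeffOn_eq_integral]
  have key : ∀ x : ℝ, fourier (-n) (x : AddCircle (b - a)) • (g x : ℂ) =
      Complex.exp ((-(2 * π * n * a / (b - a)) : ℝ) * Complex.I) *
        (((g x * Real.cos (2 * π * n * (x - a) / (b - a)) : ℝ) : ℂ) -
          ((g x * Real.sin (2 * π * n * (x - a) / (b - a)) : ℝ) : ℂ) * Complex.I) := by
    intro x
    have hT' : (b : ℂ) - a ≠ 0 := by
      have := hT.ne'
      exact_mod_cast this
    have e1 : fourier (-n) (x : AddCircle (b - a)) =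
        Complex.exp ((-(2 * π * n * a / (b - a)) : ℝ) * Complex.I) *
          Complex.exp ((-(2 * π * n * (x - a) / (b - a)) : ℝ) * Complex.I) := by
      rw [fourier_coe_apply, ← Complex.exp_add]
      congr 1
      push_cast
      field_simp
      ring
    rw [e1, Complex.exp_mul_I (((-(2 * π * n * (x - a) / (b - a)) : ℝ) : ℂ))]
    rw [← Complex.ofReal_cos, ← Complex.ofReal_sin, Real.cos_neg, Real.sin_neg]
    push_cast
    simp only [smul_eq_mul]
    ring
  simp_rw [key]
  rw [intervalIntegral.integral_const_mul, intervalIntegral.integral_sub (ii_ofReal hC)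
    ((ii_ofReal hS).mul_const _), intervalIntegral.integral_mul_const,
    intervalIntegral.integral_ofReal, intervalIntegral.integral_ofReal, norm_smul, norm_mul,
    Complex.norm_exp_ofReal_mul_I, one_mul, mul_pow, ← Complex.normSq_eq_norm_sq]
  simp only [Complex.normSq_apply]
  simp
  field_simp
  try ring

lemma deriv_coeff (a b : ℝ) (hab : a < b) (g g' : ℝ → ℝ) (hg : ContinuousOn g (Set.Icc a b))
    (hg' : ContinuousOn g' (Set.Icc a b)) (hd : ∀ x ∈ Set.Ioo a b, HasDerivAt g (g' x) x)
    (hp : g a = g b) (n : ℤ) :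
    ‖fourierCoeffOn hab (fun x => (g' x : ℂ)) n‖ ^ 2 =
      (2 * π * n / (b - a)) ^ 2 * ‖fourierCoeffOn hab (fun x => (g x : ℂ)) n‖ ^ 2 := by
  have hT : 0 < b - a := sub_pos.2 hab
  have hT' : (b : ℂ) - a ≠ 0 := by
    have := hT.ne'
    exact_mod_cast this
  have hI : IntervalIntegrable g' volume a b :=
    ContinuousOn.intervalIntegrable (by rwa [Set.uIcc_of_le hab.le])
  by_cases hn : n = 0
  · subst hn
    have h0 := intervalIntegral.integral_eq_sub_of_hasDerivAt_of_le hab.le hg hd hI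
    rw [fourierCoeffOn_eq_integral]
    simp [intervalIntegral.integral_ofReal, h0, hp]
  · have h := fourierCoeffOn_of_hasDerivAt_Ioo hab (f := fun x => (g x : ℂ))
      (f' := fun x => (g' x : ℂ)) hn
      (by rw [Set.uIcc_of_le hab.le]; exact Complex.continuous_ofReal.comp_continuousOn hg)
      (by rw [min_eq_left hab.le, max_eq_right hab.le]; exact fun x hx => (hd x hx).ofReal_comp)
      (ii_ofReal hI)
    have hn' : (n : ℂ) ≠ 0 := by exact_mod_cast hn
    have h2 : fourierCoeffOn hab (fun x => (g' x : ℂ)) n =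
        ((2 * π * n / (b - a) : ℝ) : ℂ) * Complex.I * fourierCoeffOn hab (fun x => (g x : ℂ)) n := by
      rw [h, hp]
      have : (π : ℂ) ≠ 0 := by exact_mod_cast Real.pi_ne_zero
      have := Complex.I_ne_zero
      push_cast
      field_simp
      ring
    rw [h2, norm_mul, norm_mul, Complex.norm_I, mul_one, mul_pow, Complex.norm_real,
      Real.norm_eq_abs, sq_abs]

lemma iter_coeff (a b : ℝ) (hab : a < b) (k : ℕ)
    (f : ℝ → ℝ) (hf : ContDiffOn ℝ k f (Set.Icc a b))
    (hper : ∀ i ≤ k,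
      iteratedDerivWithin i f (Set.Icc a b) a = iteratedDerivWithin i f (Set.Icc a b) b)
    (n : ℤ) (i : ℕ) (hi : i ≤ k) :
    ‖fourierCoeffOn hab (fun x => ((iteratedDerivWithin i f (Set.Icc a b) x : ℝ) : ℂ)) n‖ ^ 2 =
      (2 * π * n / (b - a)) ^ (2 * i) * ‖fourierCoeffOn hab (fun x => (f x : ℂ)) n‖ ^ 2 := by
  have hu : UniqueDiffOn ℝ (Set.Icc a b) := uniqueDiffOn_Icc hab
  induction i with
  | zero => simp
  | succ i ih =>
    have hik : i < k := hi
    rw [deriv_coeff a b hab (iteratedDerivWithin i f (Set.Icc a b))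
      (iteratedDerivWithin (i+1) f (Set.Icc a b))
      (hf.continuousOn_iteratedDerivWithin (by exact_mod_cast hik.le) hu)
      (hf.continuousOn_iteratedDerivWithin (by exact_mod_cast hi) hu) ?_ (hper i hik.le),
      ih hik.le]
    · ring
    · intro x hx
      rw [iteratedDerivWithin_succ]
      exact (((hf.differentiableOn_iteratedDerivWithin (by exact_mod_cast hik) hu) x
        (Set.Ioo_subset_Icc_self hx)).hasDerivWithinAt).hasDerivAt (Icc_mem_nhds hx.1 hx.2)

lemma hasSum_fold (G : ℤ → ℝ) (u : ℕ → ℝ) (S : ℝ) (hG : HasSum G S) (hev : ∀ n, G (-n) = G n)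
    (hu : ∀ j, 0 ≤ u j) (h0 : u 0 = G 0)
    (h1 : ∀ m : ℕ, u (2 * m + 1) + u (2 * m + 2) = 2 * G (m + 1)) : HasSum u S := by
  have hN := hG.nat_add_neg
  have hN1 : HasSum (fun m : ℕ => 2 * G (m + 1)) (S - G 0) := by
    have := (hasSum_nat_add_iff' 1).2 hN
    have e1 : (fun m : ℕ => 2 * G (m + 1)) =
        fun n : ℕ => G ((n + 1 : ℕ) : ℤ) + G (-((n + 1 : ℕ) : ℤ)) := by
      funext m
      rw [hev]; push_cast; ring
    have e2 : S - G 0 = S + G 0 - ∑ i ∈ Finset.range 1, (G (i : ℤ) + G (-(i : ℤ))) := by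
      simp
    rw [e1, e2]
    exact this
  have he : Summable (fun m => u (2 * m + 1)) :=
    Summable.of_nonneg_of_le (fun m => hu _) (fun m => by linarith [h1 m, hu (2*m+2)]) hN1.summable
  have ho : Summable (fun m => u (2 * m + 2)) :=
    Summable.of_nonneg_of_le (fun m => hu _) (fun m => by linarith [h1 m, hu (2*m+1)]) hN1.summable
  have hs : (∑' m, u (2 * m + 1)) + (∑' m, u (2 * m + 2)) = S - G 0 := by
    rw [← he.tsum_add ho, ← hN1.tsum_eq]
    exact tsum_congr h1
  have h3 : HasSum (fun j => u (j + 1)) (S - G 0) := by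
    rw [← hs]
    exact HasSum.even_add_odd (f := fun j => u (j + 1)) he.hasSum ho.hasSum
  rw [← hasSum_nat_add_iff' 1]
  simpa [h0] using h3

/-- Parseval-type identity
`Σ_{i=0}^k ∫_a^b (f^{(i)})² = Σ_{j≥1} ϖ_j θ_j²` for `f` k-times continuously
differentiable on `[a,b]` with periodic boundary values of all derivatives up to
order `k`. -/
theorem stmt3 (a b : ℝ) (hab : a < b) (hba : 1 ≤ b - a) (k : ℕ) (hk : 1 ≤ k)
    (f : ℝ → ℝ) (hf : ContDiffOn ℝ k f (Set.Icc a b))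
    (hper : ∀ i ≤ k,
      iteratedDerivWithin i f (Set.Icc a b) a = iteratedDerivWithin i f (Set.Icc a b) b) :
    HasSum
      (fun j : ℕ =>
        varpi a b k (j + 1) * (∫ x in a..b, f x * phiB a b (j + 1) x) ^ 2)
      (∑ i ∈ Finset.range (k + 1),
        ∫ x in a..b, (iteratedDerivWithin i f (Set.Icc a b) x) ^ 2) := by
  have hT : 0 < b - a := sub_pos.2 hab
  have hu : UniqueDiffOn ℝ (Set.Icc a b) := uniqueDiffOn_Icc hab
  have hcf : ContinuousOn f (Set.Icc a b) := hf.continuousOn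
  set c : ℤ → ℝ := fun n => ‖fourierCoeffOn hab (fun x => (f x : ℂ)) n‖ ^ 2 with hc
  set W : ℤ → ℝ := fun n =>
    ∑ i ∈ Finset.range (k + 1), (2 * π * (n : ℝ) / (b - a)) ^ (2 * i) with hW
  have hP : HasSum (fun n => (b - a) * (W n * c n)) (∑ i ∈ Finset.range (k + 1),
        ∫ x in a..b, (iteratedDerivWithin i f (Set.Icc a b) x) ^ 2) := by
    have : ∀ i ∈ Finset.range (k + 1), HasSum
        (fun n : ℤ => (b - a) * ((2 * π * (n : ℝ) / (b - a)) ^ (2 * i) * c n))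
        (∫ x in a..b, (iteratedDerivWithin i f (Set.Icc a b) x) ^ 2) := by
      intro i hi
      have hi' : i ≤ k := Nat.lt_succ_iff.1 (Finset.mem_range.1 hi)
      have hci := hf.continuousOn_iteratedDerivWithin (m := i) (by exact_mod_cast hi') hu
      have hL : MemLp (fun x => ((iteratedDerivWithin i f (Set.Icc a b) x : ℝ) : ℂ)) 2
          (volume.restrict (Set.Ioc a b)) :=
        memLp_two_of_cont hci
      have h := (hasSum_sq_fourierCoeffOn hab hL).mul_left (b - a)
      simp only [iter_coeff a b hab k f hf hper _ i hi', smul_eq_mul, Complex.norm_real,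
        Real.norm_eq_abs, sq_abs] at h
      rwa [mul_inv_cancel_left₀ hT.ne'] at h
    convert hasSum_sum this using 1
    funext n
    rw [← Finset.mul_sum, ← Finset.sum_mul]
  have hN := normsq_coeff a b hab f hcf
  refine hasSum_fold _ _ _ hP ?_ ?_ ?_ ?_
  · intro n
    have e1 : W (-n) = W n := by
      simp only [hW]
      refine Finset.sum_congr rfl fun i _ => ?_
      rw [pow_mul, pow_mul]; push_cast; congr 1; ring
    have e2 : c (-n) = c n := by
      have h1 := hN n
      have h2 := hN (-n)
      have e : ∀ x : ℝ, 2 * π * ((-n : ℤ) : ℝ) * (x - a) / (b - a)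
        = - (2 * π * n * (x - a) / (b - a)) := by intro x; push_cast; ring
      simp only [e, Real.cos_neg, Real.sin_neg, mul_neg, intervalIntegral.integral_neg,
        neg_sq] at h2
      rw [← h1] at h2
      exact mul_left_cancel₀ (pow_ne_zero 2 hT.ne') h2
    simp only [e1, e2]
  · intro j
    refine mul_nonneg (Finset.sum_nonneg fun i _ => ?_) (sq_nonneg _)
    rw [pow_mul]; positivity
  · have h0 := hN 0
    have e : varpi a b k (0 + 1) = W 0 := by simp [varpi, hW]
    simp only [Int.cast_zero, mul_zero, zero_mul, zero_div, Real.cos_zero, Real.sin_zero, mul_one,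
      intervalIntegral.integral_zero] at h0
    simp only [e, phiB, zero_add, if_true, intervalIntegral.integral_mul_const]
    rw [mul_pow, div_pow, Real.sq_sqrt hT.le]
    have h0' : (∫ x in a..b, f x) ^ 2 = (b - a) ^ 2 * c 0 := by rw [h0]; ring
    rw [h0']
    field_simp
  · intro m
    have h0 := hN (m + 1)
    have d1 : (2 * m + 1 + 1) / 2 = m + 1 := by omega
    have d2 : (2 * m + 2 + 1) / 2 = m + 1 := by omega
    have p1 : Even (2 * m + 1 + 1) := ⟨m + 1, by ring⟩
    have p2 : ¬ Even (2 * m + 2 + 1) := by rw [Nat.not_even_iff_odd]; exact ⟨m + 1, by ring⟩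
    have n1 : 2 * m + 1 + 1 ≠ 1 := by omega
    have n2 : 2 * m + 2 + 1 ≠ 1 := by omega
    have e1 : varpi a b k (2 * m + 1 + 1) = W (m + 1) := by simp [varpi, hW, d1]
    have e2 : varpi a b k (2 * m + 2 + 1) = W (m + 1) := by simp [varpi, hW, d2]
    simp only [e1, e2, phiB, n1, n2, p1, p2, d1, d2, if_true, if_false]
    have r : ∀ h : ℝ → ℝ, (∫ x in a..b, f x * (√(2 / (b - a)) * h x)) ^ 2
        = 2 / (b - a) * (∫ x in a..b, f x * h x) ^ 2 := by
      intro h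
      have : ∀ x, f x * (√(2 / (b - a)) * h x) = √(2 / (b - a)) * (f x * h x) := by
        intro x; ring
      simp only [this, intervalIntegral.integral_const_mul]
      rw [mul_pow, Real.sq_sqrt (by positivity)]
    rw [r, r]
    push_cast at h0 ⊢
    rw [← mul_add, ← mul_add, ← h0]
    field_simp
    try ring
end

section
/- Let L ≥ 1, a < b with b − a ≥ 1, k ≥ 1 an integer and r > 0. Define γ(S) = ((1+2k)r)^{1/(2k+1)} · (J(S)·k/(π(k+1)))^{2k/(2k+1)}. Then 0 < inf_{S ∈ Σ_L} γ(S) ≤ sup_{S ∈ Σ_L} γ(S) < ∞. -/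
open MeasureTheory Real Set Filter

noncomputable section

/-- The Pinsker-constant normalizing coefficient `γ(S)`. -/
def gammaS (a b : ℝ) (k : ℕ) (r : ℝ) (S : ℝ → ℝ) : ℝ :=
  ((1 + 2 * (k : ℝ)) * r) ^ ((1 : ℝ) / (2 * k + 1)) *
    (Jfun a b S * k / (Real.pi * (k + 1))) ^ ((2 * (k : ℝ)) / (2 * k + 1))

end

lemma aux_pos {L : ℝ} (hL : 1 ≤ L) {S : ℝ → ℝ} (hS : SigmaL L S) (z : ℝ) (hz : 0 ≤ z) :
    S z ≤ L + 1 - z / L := by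
  obtain ⟨⟨hc, -⟩, hb, S', -, hd⟩ := hS
  have hL0 : 0 < L := by linarith
  rcases le_total z L with h | h
  · have h1 := (abs_le.1 (hb z (by rw [abs_of_nonneg hz]; exact h))).2
    have : z / L ≤ 1 := (div_le_one hL0).2 h
    linarith
  · have h1 := (abs_le.1 (hb L (by rw [abs_of_pos hL0]))).2
    have key := (convex_Ici L).image_sub_le_mul_sub_of_deriv_le (f := S) hc.continuousOn
      (C := -(1 / L))
      (fun x hx => by
        rw [interior_Ici] at hx
        have hx : L < x := hx
        exact (hd x (hx.le.trans (le_abs_self x))).1.differentiableAt.differentiableWithinAt)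
      (fun x hx => by
        rw [interior_Ici] at hx
        have hx : L < x := hx
        have := hd x (hx.le.trans (le_abs_self x))
        rw [this.1.deriv]; exact this.2.2) L (mem_Ici.2 le_rfl) z h h
    have e : -(1 / L) * (z - L) = 1 - z / L := by field_simp; ring
    linarith

lemma aux_neg {L : ℝ} (hL : 1 ≤ L) {S : ℝ → ℝ} (hS : SigmaL L S) (z : ℝ) (hz : z ≤ 0) :
    -(L + 1) - z / L ≤ S z := by
  obtain ⟨⟨hc, -⟩, hb, S', -, hd⟩ := hS
  have hL0 : 0 < L := by linarith
  rcases le_total (-L) z with h | h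
  · have h1 := (abs_le.1 (hb z (by rw [abs_of_nonpos hz]; linarith))).1
    have : -1 ≤ z / L := by rw [le_div_iff₀ hL0]; linarith
    linarith
  · have h1 := (abs_le.1 (hb (-L) (by rw [abs_neg, abs_of_pos hL0]))).1
    have hx' : ∀ x, x < -L → L ≤ |x| := fun x hx => by
      have := neg_le_abs x
      linarith
    have key := (convex_Iic (-L)).image_sub_le_mul_sub_of_deriv_le (f := S) hc.continuousOn
      (C := -(1 / L))
      (fun x hx => by
        rw [interior_Iic] at hx
        exact (hd x (hx' x hx)).1.differentiableAt.differentiableWithinAt)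
      (fun x hx => by
        rw [interior_Iic] at hx
        have := hd x (hx' x hx)
        rw [this.1.deriv]; exact this.2.2) z h (-L) (mem_Iic.2 le_rfl) h
    have e : -(1 / L) * (-L - z) = 1 + z / L := by field_simp; ring
    linarith

lemma aux_int_upper {L : ℝ} (hL : 1 ≤ L) {S : ℝ → ℝ} (hS : SigmaL L S) (y : ℝ) :
    2 * ∫ z in (0:ℝ)..y, S z ≤ 2 * L * (L + 1) ^ 2 + -(1 / (2 * L)) * y ^ 2 := by
  have hL0 : 0 < L := by linarith
  have hc : Continuous S := hS.1.1
  have sq : ∀ t : ℝ, 2 * ((L + 1) * t - t ^ 2 / (2 * L)) ≤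
      2 * L * (L + 1) ^ 2 + -(1 / (2 * L)) * t ^ 2 := fun t => by
    have h1 : 2 * L * (L + 1) ^ 2 + -(1 / (2 * L)) * t ^ 2 -
      2 * ((L + 1) * t - t ^ 2 / (2 * L)) = (t - 2 * L * (L + 1)) ^ 2 / (2 * L) := by
      field_simp; ring
    have : 0 ≤ (t - 2 * L * (L + 1)) ^ 2 / (2 * L) := by positivity
    linarith
  rcases le_total 0 y with h | h
  · have h1 : ∫ z in (0:ℝ)..y, S z ≤ ∫ z in (0:ℝ)..y, ((L + 1) - z / L) :=
      intervalIntegral.integral_mono_on h (hc.intervalIntegrable _ _)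
        (Continuous.intervalIntegrable (by fun_prop) _ _)
        (fun z hz => aux_pos hL hS z hz.1)
    have h2 : ∫ z in (0:ℝ)..y, ((L + 1) - z / L) = (L + 1) * y - y ^ 2 / (2 * L) := by
      rw [intervalIntegral.integral_sub (by simp)
        (Continuous.intervalIntegrable (by fun_prop) _ _)]
      simp
      field_simp
    have := sq y
    linarith
  · have h1 : ∫ z in y..0, (-(L + 1) - z / L) ≤ ∫ z in y..0, S z :=
      intervalIntegral.integral_mono_on h
        (Continuous.intervalIntegrable (by fun_prop) _ _) (hc.intervalIntegrable _ _)
        (fun z hz => aux_neg hL hS z hz.2)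
    have h2 : ∫ z in y..0, (-(L + 1) - z / L) = (L + 1) * y + y ^ 2 / (2 * L) := by
      rw [intervalIntegral.integral_sub (by simp)
        (Continuous.intervalIntegrable (by fun_prop) _ _)]
      simp
      field_simp
      ring
    have h3 := intervalIntegral.integral_symm (μ := volume) (f := S) y 0
    have := sq (-y)
    rw [neg_sq] at this
    linarith

lemma aux_int_abs {L : ℝ} (hL : 1 ≤ L) {S : ℝ → ℝ} (hS : SigmaL L S) (R y : ℝ) (hy : |y| ≤ R) :
    |2 * ∫ z in (0:ℝ)..y, S z| ≤ 2 * (L * (1 + R) * R) := by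
  have hL0 : 0 < L := by linarith
  have hR : 0 ≤ R := (abs_nonneg y).trans hy
  have h := intervalIntegral.norm_integral_le_of_norm_le_const (a := 0) (b := y) (f := S)
    (C := L * (1 + R)) (fun x hx => by
      have hx2 : |x| ≤ |y| := by
        have := abs_sub_left_of_mem_uIcc (uIoc_subset_uIcc hx)
        simpa using this
      have h0 := hS.2.1 0 (by simpa using hL0.le)
      have h1 := hS.1.2 x 0
      rw [sub_zero] at h1
      have h2 : |S x| ≤ |S x - S 0| + |S 0| := by
        simpa using abs_add_le (S x - S 0) (S 0)
      rw [Real.norm_eq_abs]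
      have : L * |x| ≤ L * R := mul_le_mul_of_nonneg_left (hx2.trans hy) hL0.le
      nlinarith)
  rw [sub_zero, Real.norm_eq_abs] at h
  rw [abs_mul, abs_two]
  have : L * (1 + R) * |y| ≤ L * (1 + R) * R := mul_le_mul_of_nonneg_left hy (by positivity)
  linarith

lemma aux_cont {S : ℝ → ℝ} (hc : Continuous S) :
    Continuous fun y : ℝ => Real.exp (2 * ∫ z in (0:ℝ)..y, S z) := by
  have := intervalIntegral.continuous_primitive (μ := volume) (f := S)
    (fun a b => hc.intervalIntegrable a b) 0
  fun_prop

lemma aux_gauss {L : ℝ} (hL : 1 ≤ L) :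
    Integrable fun y : ℝ => Real.exp (2 * L * (L + 1) ^ 2 + -(1 / (2 * L)) * y ^ 2) := by
  simp_rw [Real.exp_add]
  exact (integrable_exp_neg_mul_sq (by positivity)).const_mul _

lemma aux_integrable {L : ℝ} (hL : 1 ≤ L) {S : ℝ → ℝ} (hS : SigmaL L S) :
    Integrable fun y : ℝ => Real.exp (2 * ∫ z in (0:ℝ)..y, S z) := by
  refine (aux_gauss hL).mono' (aux_cont hS.1.1).aestronglyMeasurable ?_
  refine Eventually.of_forall fun y => ?_
  rw [Real.norm_eq_abs, abs_of_pos (Real.exp_pos _)]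
  exact Real.exp_le_exp.2 (aux_int_upper hL hS y)

lemma aux_denom_le {L : ℝ} (hL : 1 ≤ L) {S : ℝ → ℝ} (hS : SigmaL L S) :
    qdenom S ≤ ∫ y : ℝ, Real.exp (2 * L * (L + 1) ^ 2 + -(1 / (2 * L)) * y ^ 2) :=
  integral_mono (aux_integrable hL hS) (aux_gauss hL)
    (fun y => Real.exp_le_exp.2 (aux_int_upper hL hS y))

lemma aux_le_denom {L : ℝ} (hL : 1 ≤ L) {S : ℝ → ℝ} (hS : SigmaL L S) :
    Real.exp (-(2 * (L * (1 + 1) * 1))) ≤ qdenom S := by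
  have h1 : ∫ y in Ioc (0:ℝ) 1, Real.exp (2 * ∫ z in (0:ℝ)..y, S z) ≤ qdenom S :=
    setIntegral_le_integral (aux_integrable hL hS)
      (Eventually.of_forall fun y => (Real.exp_pos _).le)
  rw [← intervalIntegral.integral_of_le zero_le_one] at h1
  have h2 : ∫ y in (0:ℝ)..1, Real.exp (-(2 * (L * (1 + 1) * 1))) ≤
      ∫ y in (0:ℝ)..1, Real.exp (2 * ∫ z in (0:ℝ)..y, S z) :=
    intervalIntegral.integral_mono_on zero_le_one (by simp)
      ((aux_cont hS.1.1).intervalIntegrable _ _)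
      (fun y hy => Real.exp_le_exp.2
        (abs_le.1 (aux_int_abs hL hS 1 y (by rw [abs_of_nonneg hy.1]; exact hy.2))).1)
  rw [intervalIntegral.integral_const] at h2
  simp only [sub_zero, one_smul] at h2
  exact h2.trans h1

lemma aux_J {L a b : ℝ} (hL : 1 ≤ L) (hab : a < b) :
    ∃ m M : ℝ, 0 < m ∧ ∀ S : ℝ → ℝ, SigmaL L S → m ≤ Jfun a b S ∧ Jfun a b S ≤ M := by
  set K := 2 * (L * (1 + (|a| + |b|)) * (|a| + |b|)) with hK
  set d := Real.exp (-(2 * (L * (1 + 1) * 1))) with hd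
  set D := ∫ y : ℝ, Real.exp (2 * L * (L + 1) ^ 2 + -(1 / (2 * L)) * y ^ 2) with hD
  refine ⟨(b - a) * (d * Real.exp (-K)), (b - a) * (D * Real.exp K), ?_, fun S hS => ?_⟩
  · have : 0 < b - a := by linarith
    positivity
  have h1 : d ≤ qdenom S := aux_le_denom hL hS
  have h2 : qdenom S ≤ D := aux_denom_le hL hS
  have hd0 : 0 < d := Real.exp_pos _
  have hq : ∀ u, 1 / qdens S u = qdenom S * Real.exp (-(2 * ∫ z in (0:ℝ)..u, S z)) := fun u => by
    rw [qdens, one_div_div, Real.exp_neg, div_eq_mul_inv]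
  have hcont : Continuous fun u => 1 / qdens S u := by
    simp_rw [hq]
    have := intervalIntegral.continuous_primitive (μ := volume) (f := S)
      (fun a b => hS.1.1.intervalIntegrable a b) 0
    fun_prop
  have hE : ∀ u ∈ Icc a b, |2 * ∫ z in (0:ℝ)..u, S z| ≤ K := fun u hu => by
    refine aux_int_abs hL hS _ u ?_
    rw [abs_le]
    have := neg_abs_le a
    have := le_abs_self b
    have := abs_nonneg a
    have := abs_nonneg b
    constructor <;> linarith [hu.1, hu.2]
  constructor
  · have := intervalIntegral.integral_mono_on (μ := volume) (f := fun _ => d * Real.exp (-K))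
      (g := fun u => 1 / qdens S u) hab.le (by simp) (hcont.intervalIntegrable _ _)
      (fun u hu => by
        rw [hq]
        have := (abs_le.1 (hE u hu)).2
        have h3 : Real.exp (-K) ≤ Real.exp (-(2 * ∫ z in (0:ℝ)..u, S z)) :=
          Real.exp_le_exp.2 (by linarith)
        exact mul_le_mul h1 h3 (Real.exp_pos _).le (hd0.le.trans h1))
    rw [intervalIntegral.integral_const, smul_eq_mul] at this
    exact this
  · have := intervalIntegral.integral_mono_on (μ := volume) (g := fun _ => D * Real.exp K)
      (f := fun u => 1 / qdens S u) hab.le (hcont.intervalIntegrable _ _) (by simp)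
      (fun u hu => by
        rw [hq]
        have := (abs_le.1 (hE u hu)).1
        have h3 : Real.exp (-(2 * ∫ z in (0:ℝ)..u, S z)) ≤ Real.exp K :=
          Real.exp_le_exp.2 (by linarith)
        exact mul_le_mul h2 h3 (Real.exp_pos _).le (hd0.le.trans (h1.trans h2)))
    rw [intervalIntegral.integral_const, smul_eq_mul] at this
    exact this


/-- `0 < inf_{S ∈ Σ_L} γ(S) ≤ sup_{S ∈ Σ_L} γ(S) < ∞`. -/
theorem stmt5 (L a b : ℝ) (hL : 1 ≤ L) (hab : a < b) (hba : 1 ≤ b - a)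
    (k : ℕ) (hk : 1 ≤ k) (r : ℝ) (hr : 0 < r) :
    ∃ m M : ℝ, 0 < m ∧ m ≤ M ∧
      ∀ S : ℝ → ℝ, SigmaL L S → m ≤ gammaS a b k r S ∧ gammaS a b k r S ≤ M := by
  obtain ⟨m, M, hm, h⟩ := aux_J (L := L) hL hab
  have hk0 : (0:ℝ) < k := by exact_mod_cast hk
  have hpi := Real.pi_pos
  have hmono : ∀ x y : ℝ, 0 ≤ x → x ≤ y →
      ((1 + 2 * (k : ℝ)) * r) ^ ((1 : ℝ) / (2 * k + 1)) *
        (x * k / (Real.pi * (k + 1))) ^ ((2 * (k : ℝ)) / (2 * k + 1)) ≤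
      ((1 + 2 * (k : ℝ)) * r) ^ ((1 : ℝ) / (2 * k + 1)) *
        (y * k / (Real.pi * (k + 1))) ^ ((2 * (k : ℝ)) / (2 * k + 1)) := fun x y hx hxy => by
    refine mul_le_mul_of_nonneg_left ?_ (by positivity)
    refine Real.rpow_le_rpow (by positivity) ?_ (by positivity)
    gcongr
  refine ⟨_, _, ?_, hmono m (max m M) hm.le (le_max_left _ _), fun S hS => ?_⟩
  · positivity
  · obtain ⟨h1, h2⟩ := h S hS
    exact ⟨hmono _ _ hm.le h1, hmono _ _ (hm.le.trans h1) (h2.trans (le_max_right _ _))⟩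
end

section
/- Let a < b be reals and let n ≥ 1 be an odd integer. Set x_l = a + l(b−a)/n for 1 ≤ l ≤ n. Then the trigonometric basis functions satisfy the discrete orthonormality relations ((b−a)/n) Σ_{l=1}^n φ_i(x_l) φ_j(x_l) = δ_{ij} for all 1 ≤ i, j ≤ n. -/
open Real

lemma aux_exp (n : ℕ) (hn : 1 ≤ n) (m : ℤ) (hm : ¬ (n : ℤ) ∣ m) :
    ∑ l ∈ Finset.Icc 1 n, Complex.exp (((m * (2 * π * l / n) : ℝ) : ℂ) * Complex.I) = 0 := by
  have hn0 : (n : ℂ) ≠ 0 := by exact_mod_cast (by omega : n ≠ 0)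
  have hp := Complex.isPrimitiveRoot_exp n (by omega)
  set z : ℂ := Complex.exp (2 * π * Complex.I / n) ^ m with hz
  have hz1 : z ≠ 1 := by
    rw [hz, Ne, hp.zpow_eq_one_iff_dvd]; exact hm
  have hzn : z ^ n = 1 := by
    rw [hz, ← zpow_natCast, ← zpow_mul, hp.zpow_eq_one_iff_dvd]
    exact Dvd.intro_left m rfl
  have h1 : ∀ l : ℕ, Complex.exp (((m * (2 * π * l / n) : ℝ) : ℂ) * Complex.I) = z ^ l := by
    intro l
    rw [hz, ← Complex.exp_int_mul, ← Complex.exp_nat_mul]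
    congr 1
    push_cast
    ring
  simp_rw [h1]
  have h2 : ∑ l ∈ Finset.Icc 1 n, z ^ l = z * ∑ l ∈ Finset.range n, z ^ l := by
    rw [← Finset.Ico_add_one_right_eq_Icc, Finset.sum_Ico_eq_sum_range, Finset.mul_sum]
    simp [pow_add]
  rw [h2, geom_sum_eq hz1, hzn]
  simp

lemma aux_cos (n : ℕ) (hn : 1 ≤ n) (m : ℤ) (hm : ¬ (n : ℤ) ∣ m) :
    ∑ l ∈ Finset.Icc 1 n, Real.cos (m * (2 * π * l / n)) = 0 := by
  have h := congrArg Complex.re (aux_exp n hn m hm)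
  rw [Complex.re_sum] at h
  simpa only [Complex.exp_ofReal_mul_I_re, Complex.zero_re] using h

lemma aux_sin (n : ℕ) (hn : 1 ≤ n) (m : ℤ) (hm : m = 0 ∨ ¬ (n : ℤ) ∣ m) :
    ∑ l ∈ Finset.Icc 1 n, Real.sin (m * (2 * π * l / n)) = 0 := by
  rcases hm with rfl | hm
  · simp
  have h := congrArg Complex.im (aux_exp n hn m hm)
  rw [Complex.im_sum] at h
  simpa only [Complex.exp_ofReal_mul_I_im, Complex.zero_im] using h

lemma aux_cos' (n : ℕ) (hn : 1 ≤ n) (m : ℤ) (hm : |m| < n) :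
    ∑ l ∈ Finset.Icc 1 n, Real.cos (m * (2 * π * l / n)) = if m = 0 then (n : ℝ) else 0 := by
  split_ifs with h
  · simp [h]
  · exact aux_cos n hn m fun hd => h (Int.eq_zero_of_abs_lt_dvd hd hm)

lemma aux_sin' (n : ℕ) (hn : 1 ≤ n) (m : ℤ) (hm : |m| < n) :
    ∑ l ∈ Finset.Icc 1 n, Real.sin (m * (2 * π * l / n)) = 0 := by
  apply aux_sin n hn m
  by_cases h : m = 0
  · exact Or.inl h
  · exact Or.inr fun hd => h (Int.eq_zero_of_abs_lt_dvd hd hm)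

lemma aux_cc (n : ℕ) (hn : 1 ≤ n) (p q : ℕ) (h : p + q < n) :
    ∑ l ∈ Finset.Icc 1 n, Real.cos (p * (2 * π * l / n)) * Real.cos (q * (2 * π * l / n))
      = ((if (p : ℤ) - q = 0 then (n : ℝ) else 0) + (if (p : ℤ) + q = 0 then (n : ℝ) else 0)) / 2 := by
  rw [← aux_cos' n hn (p - q) (by rw [abs_lt]; omega),
    ← aux_cos' n hn (p + q) (by rw [abs_lt]; omega), ← Finset.sum_add_distrib, Finset.sum_div]
  refine Finset.sum_congr rfl fun l _ => ?_
  push_cast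
  rw [sub_mul, add_mul, Real.cos_sub, Real.cos_add]
  ring

lemma aux_ss (n : ℕ) (hn : 1 ≤ n) (p q : ℕ) (h : p + q < n) :
    ∑ l ∈ Finset.Icc 1 n, Real.sin (p * (2 * π * l / n)) * Real.sin (q * (2 * π * l / n))
      = ((if (p : ℤ) - q = 0 then (n : ℝ) else 0) - (if (p : ℤ) + q = 0 then (n : ℝ) else 0)) / 2 := by
  rw [← aux_cos' n hn (p - q) (by rw [abs_lt]; omega),
    ← aux_cos' n hn (p + q) (by rw [abs_lt]; omega), ← Finset.sum_sub_distrib, Finset.sum_div]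
  refine Finset.sum_congr rfl fun l _ => ?_
  push_cast
  rw [sub_mul, add_mul, Real.cos_sub, Real.cos_add]
  ring

lemma aux_sc (n : ℕ) (hn : 1 ≤ n) (p q : ℕ) (h : p + q < n) :
    ∑ l ∈ Finset.Icc 1 n, Real.sin (p * (2 * π * l / n)) * Real.cos (q * (2 * π * l / n)) = 0 := by
  have h1 := aux_sin' n hn (p - q) (by rw [abs_lt]; omega)
  have h2 := aux_sin' n hn (p + q) (by rw [abs_lt]; omega)
  have h3 : ∑ l ∈ Finset.Icc 1 n,
      Real.sin (p * (2 * π * l / n)) * Real.cos (q * (2 * π * l / n)) =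
      (∑ l ∈ Finset.Icc 1 n, Real.sin (((p - q : ℤ) : ℝ) * (2 * π * l / n)) +
       ∑ l ∈ Finset.Icc 1 n, Real.sin (((p + q : ℤ) : ℝ) * (2 * π * l / n))) / 2 := by
    rw [← Finset.sum_add_distrib, Finset.sum_div]
    refine Finset.sum_congr rfl fun l _ => ?_
    push_cast
    rw [sub_mul, add_mul, Real.sin_sub, Real.sin_add]
    ring
  rw [h3, h1, h2]; simp

/-- The unnormalised shape of the basis functions at the design points. -/
lemma aux_phi (a b : ℝ) (hab : a < b) (n j l : ℕ) (hn : 1 ≤ n) :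
    phiB a b j (a + l * (b - a) / n) =
      (if j = 1 then 1 / Real.sqrt (b - a) else Real.sqrt (2 / (b - a))) *
      (if Even j ∨ j = 1 then Real.cos (((j / 2 : ℕ) : ℝ) * (2 * π * l / n))
        else Real.sin (((j / 2 : ℕ) : ℝ) * (2 * π * l / n))) := by
  have hb : b - a ≠ 0 := by linarith
  have e : 2 * π * ((j / 2 : ℕ) : ℝ) * (a + l * (b - a) / n - a) / (b - a)
      = ((j / 2 : ℕ) : ℝ) * (2 * π * l / n) := by
    have hn0 : (n : ℝ) ≠ 0 := by exact_mod_cast (by omega : n ≠ 0)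
    field_simp
    ring
  unfold phiB
  rw [e]
  by_cases h : j = 1
  · simp [h]
  · simp [h]

/-- discrete orthonormality of the trigonometric basis at the design
points `x_l = a + l(b−a)/n`, `1 ≤ l ≤ n`, for odd `n`:
`((b−a)/n) Σ_{l=1}^n φ_i(x_l) φ_j(x_l) = δ_{ij}` for `1 ≤ i, j ≤ n`. -/
theorem stmt11 (a b : ℝ) (hab : a < b) (n : ℕ) (hn : 1 ≤ n) (hodd : Odd n)
    (i j : ℕ) (hi : i ∈ Finset.Icc 1 n) (hj : j ∈ Finset.Icc 1 n) :
    (b - a) / n *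
        ∑ l ∈ Finset.Icc 1 n,
          phiB a b i (a + l * (b - a) / n) * phiB a b j (a + l * (b - a) / n)
      = if i = j then 1 else 0 := by
  rw [Finset.mem_Icc] at hi hj
  have hb : 0 < b - a := by linarith
  have hn0 : (n : ℝ) ≠ 0 := by exact_mod_cast (by omega : n ≠ 0)
  have hs1 : (1 / Real.sqrt (b - a)) * (1 / Real.sqrt (b - a)) = 1 / (b - a) := by
    rw [div_mul_div_comm, Real.mul_self_sqrt hb.le, one_mul]
  have hs2 : Real.sqrt (2 / (b - a)) * Real.sqrt (2 / (b - a)) = 2 / (b - a) :=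
    Real.mul_self_sqrt (by positivity)
  have hpq : i / 2 + j / 2 < n := by
    obtain ⟨k, rfl⟩ := hodd
    omega
  have hpq' : j / 2 + i / 2 < n := by omega
  rw [Finset.sum_congr rfl fun l _ => by
    rw [aux_phi a b hab n i l hn, aux_phi a b hab n j l hn, mul_mul_mul_comm]]
  rw [← Finset.mul_sum]
  by_cases hie : Even i ∨ i = 1 <;> by_cases hje : Even j ∨ j = 1
  · simp only [hie, hje, if_true]
    rw [aux_cc n hn _ _ hpq]
    by_cases hij : i = j
    · subst hij
      by_cases h1 : i = 1
      · subst h1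
        simp only [if_true, hs1]
        norm_num
        field_simp
      · rw [if_neg h1, hs2, if_pos (by omega), if_neg (by omega), if_pos rfl]
        field_simp
        ring
    · have : i / 2 ≠ j / 2 := by
        simp only [Nat.even_iff] at hie hje
        omega
      rw [if_neg (c := (((i / 2 : ℕ) : ℤ) - ((j / 2 : ℕ) : ℤ) = 0)) (by omega),
        if_neg (c := (((i / 2 : ℕ) : ℤ) + ((j / 2 : ℕ) : ℤ) = 0)) (by omega), if_neg hij]
      simp
  · simp only [hie, hje, if_true, if_false]
    have hij : i ≠ j := by rintro rfl; exact hje hie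
    simp_rw [mul_comm (Real.cos _) (Real.sin _)]
    rw [aux_sc n hn _ _ hpq', if_neg hij]
    simp
  · simp only [hie, hje, if_true, if_false]
    have hij : i ≠ j := by rintro rfl; exact hie hje
    rw [aux_sc n hn _ _ hpq, if_neg hij]
    simp
  · simp only [hie, hje, if_false]
    rw [aux_ss n hn _ _ hpq]
    simp only [Nat.even_iff] at hie hje
    rw [if_neg (c := i = 1) (by omega), if_neg (c := j = 1) (by omega), hs2,
      if_neg (c := (((i / 2 : ℕ) : ℤ) + ((j / 2 : ℕ) : ℤ) = 0)) (by omega)]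
    by_cases hij : i = j
    · rw [if_pos (by omega), if_pos hij]
      field_simp
      ring
    · rw [if_neg (by omega), if_neg hij]
      simp
end

section
/- Let G : ℝ → ℝ be a C^∞ nonnegative function supported in [−1,1] with ∫_ℝ G = 1, and for 0 < η < 1 let I_η(x) = η^{−1} ∫_ℝ 1_{[−(1−η), 1−η]}(u) G((u−x)/η) du. Let e_1(x) = 1/√2 and, for j ≥ 2, e_j(x) = Tr_j(π⌊j/2⌋ x), where Tr_j(z) = cos z for even j and Tr_j(z) = sin z for odd j; for an integrable f on [−1,1] set ē_j(f) = ∫_{−1}^1 e_j(v)² f(v) dv. Then lim_{η→0+} sup_{j ≥ 1} | ē_j(I_η²) − 1 | = 0. -/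
open MeasureTheory Real Set Filter

noncomputable section

/-- The mollified indicator `I_η(x) = η⁻¹ ∫ 1_{[−(1−η),1−η]}(u) G((u−x)/η) du`. -/
def Ieta (G : ℝ → ℝ) (η : ℝ) (x : ℝ) : ℝ :=
  η⁻¹ * ∫ u : ℝ, Set.indicator (Set.Icc (-(1 - η)) (1 - η)) (fun _ => (1 : ℝ)) u *
    G ((u - x) / η)

/-- The trigonometric basis `(e_j)_{j ≥ 1}` of `L²[−1,1]`. -/
def ebasis (j : ℕ) (x : ℝ) : ℝ :=
  if j = 1 then 1 / Real.sqrt 2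
  else if Even j then Real.cos (Real.pi * ((j / 2 : ℕ) : ℝ) * x)
  else Real.sin (Real.pi * ((j / 2 : ℕ) : ℝ) * x)

/-- `ē_j(f) = ∫_{−1}^1 e_j(v)² f(v) dv`. -/
def ebar (j : ℕ) (f : ℝ → ℝ) : ℝ := ∫ v in (-1 : ℝ)..1, (ebasis j v) ^ 2 * f v

end

lemma aux_norm (G : ℝ → ℝ) (hint : ∫ x : ℝ, G x = 1) (η : ℝ) (hη : 0 < η) (x : ℝ) :
    η⁻¹ * ∫ u : ℝ, G ((u - x) / η) = 1 := by
  have h1 : ∫ u : ℝ, G ((u - x) / η) = ∫ u : ℝ, G (u / η) :=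
    integral_sub_right_eq_self (fun u => G (u / η)) x
  rw [h1, Measure.integral_comp_div, hint, abs_of_pos hη, smul_eq_mul, mul_one,
    inv_mul_cancel₀ hη.ne']

lemma aux_int (G : ℝ → ℝ) (hc : Continuous G)
    (hsupp : ∀ x ∉ Set.Icc (-1 : ℝ) 1, G x = 0) (η : ℝ) (hη : 0 < η) (x : ℝ) :
    Integrable (fun u : ℝ => G ((u - x) / η)) := by
  have h0 : Integrable G :=
    hc.integrable_of_hasCompactSupport (HasCompactSupport.intro isCompact_Icc hsupp)
  exact (h0.comp_div hη.ne').comp_sub_right x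

lemma Ieta_eq (G : ℝ → ℝ) (η : ℝ) (h1 : η < 1) (x : ℝ) :
    Ieta G η x = η⁻¹ * ∫ u in (-(1 - η))..(1 - η), G ((u - x) / η) := by
  unfold Ieta
  rw [intervalIntegral.integral_of_le (by linarith), ← integral_Icc_eq_integral_Ioc,
    ← integral_indicator measurableSet_Icc]
  congr 2
  ext u
  by_cases hu : u ∈ Set.Icc (-(1 - η)) (1 - η) <;>
    simp only [Set.indicator_of_mem, Set.indicator_of_notMem, hu, one_mul, zero_mul, not_false_eq_true]

lemma Ieta_cont (G : ℝ → ℝ) (hc : Continuous G) (η : ℝ) (h1 : η < 1) :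
    Continuous (Ieta G η) := by
  have : Ieta G η = fun x => η⁻¹ * ∫ u in (-(1 - η))..(1 - η), G ((u - x) / η) :=
    funext (Ieta_eq G η h1)
  rw [this]
  refine continuous_const.mul ?_
  apply intervalIntegral.continuous_parametric_intervalIntegral_of_continuous'
  simp only [Function.uncurry_def]
  fun_prop

lemma Ieta_nonneg (G : ℝ → ℝ) (hpos : ∀ x, 0 ≤ G x) (η : ℝ) (hη : 0 < η) (x : ℝ) :
    0 ≤ Ieta G η x := by
  unfold Ieta
  refine mul_nonneg (inv_nonneg.2 hη.le) (integral_nonneg fun u => ?_)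
  exact mul_nonneg (Set.indicator_nonneg (fun _ _ => zero_le_one) u) (hpos _)

lemma Ieta_le (G : ℝ → ℝ) (hc : Continuous G) (hpos : ∀ x, 0 ≤ G x)
    (hsupp : ∀ x ∉ Set.Icc (-1 : ℝ) 1, G x = 0) (hint : ∫ x : ℝ, G x = 1)
    (η : ℝ) (hη : 0 < η) (x : ℝ) :
    Ieta G η x ≤ 1 := by
  rw [← aux_norm G hint η hη x]
  unfold Ieta
  refine mul_le_mul_of_nonneg_left ?_ (inv_nonneg.2 hη.le)
  refine integral_mono_of_nonneg (ae_of_all _ fun u => ?_) (aux_int G hc hsupp η hη x)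
    (ae_of_all _ fun u => ?_)
  · exact mul_nonneg (Set.indicator_nonneg (fun _ _ => zero_le_one) u) (hpos _)
  · refine mul_le_of_le_one_left (hpos _) ?_
    exact Set.indicator_apply_le' (fun _ => le_rfl) (fun _ => zero_le_one)

lemma Ieta_one (G : ℝ → ℝ) (hsupp : ∀ x ∉ Set.Icc (-1 : ℝ) 1, G x = 0)
    (hint : ∫ x : ℝ, G x = 1) (η : ℝ) (hη : 0 < η) (x : ℝ)
    (ha : -(1 - 2 * η) ≤ x) (hb : x ≤ 1 - 2 * η) :
    Ieta G η x = 1 := by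
  rw [← aux_norm G hint η hη x]
  unfold Ieta
  congr 2
  ext u
  by_cases hu : u ∈ Set.Icc (-(1 - η)) (1 - η)
  · rw [Set.indicator_of_mem hu, one_mul]
  · rw [hsupp, mul_zero]
    intro h
    apply hu
    have e1 := (le_div_iff₀ hη).1 h.1
    have e2 := (div_le_iff₀ hη).1 h.2
    constructor <;> linarith

lemma ebasis_cont (j : ℕ) : Continuous (ebasis j) := by
  unfold ebasis
  split_ifs <;> fun_prop

lemma ebasis_sq_le (j : ℕ) (x : ℝ) : ebasis j x ^ 2 ≤ 1 := by
  unfold ebasis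
  split_ifs
  · rw [div_pow, Real.sq_sqrt (by norm_num)]; norm_num
  · exact Real.cos_sq_le_one _
  · exact Real.sin_sq_le_one _

lemma ebasis_int (j : ℕ) (hj : 1 ≤ j) : ∫ v in (-1 : ℝ)..1, ebasis j v ^ 2 = 1 := by
  unfold ebasis
  by_cases h1 : j = 1
  · simp only [h1, if_true]
    rw [intervalIntegral.integral_const, div_pow, Real.sq_sqrt (by norm_num)]
    norm_num
  · have hk : 0 < ((j / 2 : ℕ) : ℝ) := by
      have : 0 < j / 2 := by omega
      exact_mod_cast this
    have hs : Real.sin (Real.pi * ((j / 2 : ℕ) : ℝ)) = 0 := by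
      rw [mul_comm]; exact Real.sin_nat_mul_pi _
    have hc : Real.pi * ((j / 2 : ℕ) : ℝ) ≠ 0 := by positivity
    simp only [h1, if_false]
    split_ifs
    · rw [intervalIntegral.integral_comp_mul_left (fun x => Real.cos x ^ 2) hc, integral_cos_sq]
      simp only [mul_neg, mul_one, Real.sin_neg, hs, smul_eq_mul]
      field_simp
      ring
    · rw [intervalIntegral.integral_comp_mul_left (fun x => Real.sin x ^ 2) hc, integral_sin_sq]
      simp only [mul_neg, mul_one, Real.sin_neg, hs, smul_eq_mul]
      field_simp
      ring

/-- `lim_{η→0+} sup_{j ≥ 1} |ē_j(I_η²) − 1| = 0`, stated as uniform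
convergence over `j ≥ 1`. -/
theorem stmt13 (G : ℝ → ℝ) (hsmooth : ContDiff ℝ (⊤ : ℕ∞) G) (hpos : ∀ x, 0 ≤ G x)
    (hsupp : ∀ x ∉ Set.Icc (-1 : ℝ) 1, G x = 0) (hint : ∫ x : ℝ, G x = 1) :
    ∀ δ : ℝ, 0 < δ → ∃ η₀ : ℝ, 0 < η₀ ∧ ∀ η : ℝ, 0 < η → η < η₀ →
      ∀ j : ℕ, 1 ≤ j → |ebar j (fun v => (Ieta G η v) ^ 2) - 1| ≤ δ := by
  intro δ hδ
  have hc : Continuous G := hsmooth.continuous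
  refine ⟨min (1 / 2) (δ / 4), by positivity, fun η hη hlt j hj => ?_⟩
  have hη1 : η < 1 / 2 := lt_of_lt_of_le hlt (min_le_left _ _)
  have hη2 : η < δ / 4 := lt_of_lt_of_le hlt (min_le_right _ _)
  have hI := Ieta_cont G hc η (by linarith)
  have he := ebasis_cont j
  unfold ebar
  have hone := ebasis_int j hj
  have hsub : (∫ v in (-1 : ℝ)..1, ebasis j v ^ 2 * Ieta G η v ^ 2) - 1 =
      (∫ v in (-1 : ℝ)..1, ebasis j v ^ 2 * Ieta G η v ^ 2) -
        ∫ v in (-1 : ℝ)..1, ebasis j v ^ 2 := by rw [hone]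
  simp only []
  rw [hsub, ← intervalIntegral.integral_sub
    (Continuous.intervalIntegrable (by fun_prop) _ _)
    (Continuous.intervalIntegrable (by fun_prop) _ _)]
  set F : ℝ → ℝ := fun v => ebasis j v ^ 2 * Ieta G η v ^ 2 - ebasis j v ^ 2 with hF
  have hFc : Continuous F := by fun_prop
  have hF1 : ∀ v, ‖F v‖ ≤ 1 := by
    intro v
    have a0 := Ieta_nonneg G hpos η hη v
    have a1 := Ieta_le G hc hpos hsupp hint η hη v
    have b0 := sq_nonneg (ebasis j v)
    have b1 := ebasis_sq_le j v
    have c0 := sq_nonneg (Ieta G η v)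
    have c1 : Ieta G η v ^ 2 ≤ 1 := pow_le_one₀ a0 a1
    rw [Real.norm_eq_abs, abs_le]
    simp only [hF]
    constructor <;> nlinarith
  have hii : ∀ a b : ℝ, IntervalIntegrable F volume a b :=
    fun a b => hFc.intervalIntegrable a b
  have k1 := intervalIntegral.norm_integral_le_of_norm_le_const (f := F) (C := 1)
    (a := -1) (b := -(1 - 2 * η)) (fun v _ => hF1 v)
  have k3 := intervalIntegral.norm_integral_le_of_norm_le_const (f := F) (C := 1)
    (a := 1 - 2 * η) (b := 1) (fun v _ => hF1 v)
  have k2 := intervalIntegral.norm_integral_le_of_norm_le_const (f := F) (C := 0)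
    (a := -(1 - 2 * η)) (b := 1 - 2 * η) (fun v hv => by
      rw [Set.uIoc_of_le (by linarith)] at hv
      simp [hF, Ieta_one G hsupp hint η hη v hv.1.le hv.2])
  rw [abs_of_nonneg (by linarith)] at k1 k3
  rw [Real.norm_eq_abs, abs_le] at k1 k2 k3
  have s1 := intervalIntegral.integral_add_adjacent_intervals
    (hii (-1) (-(1 - 2 * η))) (hii (-(1 - 2 * η)) (1 - 2 * η))
  have s2 := intervalIntegral.integral_add_adjacent_intervals
    (hii (-1) (1 - 2 * η)) (hii (1 - 2 * η) 1)
  change |∫ v in (-1 : ℝ)..1, F v| ≤ δ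
  rw [abs_le]
  constructor <;> linarith [k1.1, k1.2, k2.1, k2.2, k3.1, k3.2]
end

section
/- Let L ≥ 1, a < b with b − a ≥ 1, and ε > 0. Let S, S_0 ∈ Σ_L satisfy S(x) = S_0(x) for all x ∉ [a,b] and sup_{x ∈ [a,b]} |S(x) − S_0(x)| ≤ ε. Then for every x ∈ ℝ, |q_S(x) − q_{S_0}(x)| ≤ q_{S_0}(x) · (e^{4(b−a)ε} − 1); in particular sup_{x ∈ ℝ} |q_S(x) − q_{S_0}(x)| ≤ q^* (e^{4(b−a)ε} − 1), where q^* = sup_{x ∈ ℝ} sup_{S ∈ Σ_L} q_S(x). -/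
open MeasureTheory Real Set Filter

theorem aux_int_s15 (a b : ℝ) (hab : a < b) (ε : ℝ) (hε : 0 < ε) (g : ℝ → ℝ)
    (heq : ∀ x ∉ Set.Icc a b, g x = 0)
    (hclose : ∀ x ∈ Set.Icc a b, |g x| ≤ ε) (x : ℝ) :
    |∫ z in (0:ℝ)..x, g z| ≤ (b - a) * ε := by
  have hi : Integrable ((Set.Icc a b).indicator (fun _ : ℝ => ε)) := by
    rw [integrable_indicator_iff measurableSet_Icc]
    exact integrableOn_const (by simp)
  have hle : ∀ z, ‖g z‖ ≤ (Set.Icc a b).indicator (fun _ : ℝ => ε) z := by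
    intro z
    by_cases hz : z ∈ Set.Icc a b
    · simpa [hz] using hclose z hz
    · simp [hz, heq z hz]
  calc |∫ z in (0:ℝ)..x, g z| = ‖∫ z in Set.uIoc 0 x, g z‖ := by
        rw [← Real.norm_eq_abs, intervalIntegral.norm_intervalIntegral_eq]
    _ ≤ ∫ z in Set.uIoc 0 x, (Set.Icc a b).indicator (fun _ : ℝ => ε) z :=
        norm_integral_le_of_norm_le hi.integrableOn (Filter.Eventually.of_forall hle)
    _ ≤ ∫ z, (Set.Icc a b).indicator (fun _ : ℝ => ε) z :=
        setIntegral_le_integral hi (Filter.Eventually.of_forall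
          (fun z => (norm_nonneg _).trans (hle z)))
    _ = (b - a) * ε := by
        rw [integral_indicator measurableSet_Icc]
        simp [hab.le]

theorem aux_alg (E E0 D D0 K : ℝ) (hK : 1 ≤ K) (hE : 0 ≤ E) (hE0 : 0 ≤ E0) (hD : 0 ≤ D)
    (hD0 : 0 ≤ D0) (h1 : E ≤ K * E0) (h2 : E0 ≤ K * E) (h3 : D ≤ K * D0) (h4 : D0 ≤ K * D) :
    |E / D - E0 / D0| ≤ E0 / D0 * (K ^ 2 - 1) := by
  have hK0 : 0 < K := by linarith
  rcases hD.eq_or_lt with h | h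
  · subst h
    have : D0 = 0 := by linarith
    simp [this]
  · have hp : 0 < D0 := by
      by_contra hn
      have : D0 = 0 := by linarith
      subst this
      linarith
    have u : E / D ≤ K ^ 2 * (E0 / D0) := by
      rw [← mul_div_assoc, div_le_div_iff₀ h hp]
      calc E * D0 ≤ (K * E0) * (K * D) := by gcongr
        _ = _ := by ring
    have l : E0 / D0 ≤ K ^ 2 * (E / D) := by
      rw [← mul_div_assoc, div_le_div_iff₀ hp h]
      calc E0 * D ≤ (K * E) * (K * D0) := by gcongr
        _ = _ := by ring
    have p0 : 0 ≤ E0 / D0 := by positivity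
    have p : 0 ≤ E / D := by positivity
    have k : 0 ≤ K ^ 2 - 1 := by nlinarith
    rw [abs_le]
    constructor
    · rcases le_total (E / D) (E0 / D0) with hh | hh
      · nlinarith
      · nlinarith [mul_nonneg p0 k]
    · nlinarith

theorem aux_den (S S0 : ℝ → ℝ) (hS : Continuous S) (hS0 : Continuous S0) (K : ℝ)
    (h : ∀ x, Real.exp (2 * ∫ z in (0:ℝ)..x, S z) ≤ K * Real.exp (2 * ∫ z in (0:ℝ)..x, S0 z))
    (h' : ∀ x, Real.exp (2 * ∫ z in (0:ℝ)..x, S0 z) ≤ K * Real.exp (2 * ∫ z in (0:ℝ)..x, S z)) :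
    qdenom S ≤ K * qdenom S0 := by
  have c : ∀ T : ℝ → ℝ, Continuous T →
      Continuous (fun x => Real.exp (2 * ∫ z in (0:ℝ)..x, T z)) := by
    intro T hT
    have := intervalIntegral.continuous_primitive (fun a b => hT.intervalIntegrable (μ := volume) a b) 0
    fun_prop
  unfold qdenom
  rw [← integral_const_mul]
  by_cases hi : Integrable (fun x => Real.exp (2 * ∫ z in (0:ℝ)..x, S0 z))
  · refine integral_mono ?_ (hi.const_mul K) h
    refine (hi.const_mul K).mono' (c S hS).aestronglyMeasurable (Filter.Eventually.of_forall ?_)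
    intro x
    simpa using h x
  · have hn : ¬ Integrable (fun x => Real.exp (2 * ∫ z in (0:ℝ)..x, S z)) := by
      intro hj
      apply hi
      refine (hj.const_mul K).mono' (c S0 hS0).aestronglyMeasurable (Filter.Eventually.of_forall ?_)
      intro x
      simpa using h' x
    rw [integral_undef hn, integral_const_mul, integral_undef hi]
    simp

/-- if `S, S_0 ∈ Σ_L` coincide outside `[a,b]` and differ by at most
`ε` on `[a,b]`, then `|q_S(x) − q_{S_0}(x)| ≤ q_{S_0}(x)(e^{4(b−a)ε} − 1)` for all
`x`; in particular any uniform upper bound `q^*` for the ergodic densities over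
`Σ_L` gives `|q_S(x) − q_{S_0}(x)| ≤ q^*(e^{4(b−a)ε} − 1)`. -/
theorem stmt15 (L a b : ℝ) (hL : 1 ≤ L) (hab : a < b) (hba : 1 ≤ b - a)
    (ε : ℝ) (hε : 0 < ε) (S S0 : ℝ → ℝ) (hS : SigmaL L S) (hS0 : SigmaL L S0)
    (heq : ∀ x ∉ Set.Icc a b, S x = S0 x)
    (hclose : ∀ x ∈ Set.Icc a b, |S x - S0 x| ≤ ε) :
    (∀ x : ℝ, |qdens S x - qdens S0 x| ≤ qdens S0 x * (Real.exp (4 * (b - a) * ε) - 1)) ∧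
    ∀ qup : ℝ, (∀ S' : ℝ → ℝ, SigmaL L S' → ∀ x : ℝ, qdens S' x ≤ qup) →
      ∀ x : ℝ, |qdens S x - qdens S0 x| ≤ qup * (Real.exp (4 * (b - a) * ε) - 1) := by
  have hc := hS.1.1
  have hc0 := hS0.1.1
  have key := aux_int_s15 a b hab ε hε (fun x => S x - S0 x)
    (fun x hx => by simp [heq x hx]) hclose
  have key' : ∀ x, |(∫ z in (0:ℝ)..x, S z) - ∫ z in (0:ℝ)..x, S0 z| ≤ (b - a) * ε := by
    intro x
    rw [← intervalIntegral.integral_sub (hc.intervalIntegrable _ _) (hc0.intervalIntegrable _ _)]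
    exact key x
  have h1 : ∀ x, Real.exp (2 * ∫ z in (0:ℝ)..x, S z)
      ≤ Real.exp (2 * ((b - a) * ε)) * Real.exp (2 * ∫ z in (0:ℝ)..x, S0 z) := by
    intro x
    rw [← Real.exp_add, Real.exp_le_exp]
    linarith [(abs_le.1 (key' x)).2]
  have h2 : ∀ x, Real.exp (2 * ∫ z in (0:ℝ)..x, S0 z)
      ≤ Real.exp (2 * ((b - a) * ε)) * Real.exp (2 * ∫ z in (0:ℝ)..x, S z) := by
    intro x
    rw [← Real.exp_add, Real.exp_le_exp]
    linarith [(abs_le.1 (key' x)).1]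
  have hδ : 0 ≤ (b - a) * ε := mul_nonneg (by linarith) hε.le
  have hn : ∀ T, 0 ≤ qdenom T := fun T => integral_nonneg (fun x => (Real.exp_pos _).le)
  have hK : Real.exp (4 * (b - a) * ε) = Real.exp (2 * ((b - a) * ε)) ^ 2 := by
    rw [← Real.exp_nat_mul]
    congr 1
    push_cast
    ring
  have main : ∀ x : ℝ, |qdens S x - qdens S0 x|
      ≤ qdens S0 x * (Real.exp (4 * (b - a) * ε) - 1) := by
    intro x
    rw [hK]
    exact aux_alg _ _ _ _ _ (Real.one_le_exp (by linarith)) (Real.exp_pos _).le (Real.exp_pos _).le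
      (hn S) (hn S0) (h1 x) (h2 x) (aux_den S S0 hc hc0 _ h1 h2) (aux_den S0 S hc0 hc _ h2 h1)
  refine ⟨main, fun qup hq x => (main x).trans ?_⟩
  refine mul_le_mul_of_nonneg_right (hq S0 hS0 x) ?_
  have := Real.one_le_exp (x := 4 * (b - a) * ε) (by linarith)
  linarith
end
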